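/- For the exponential utility function u(t) = (1/γ)(1 - e^{-γt}) with γ > 0, the Optimized Certainty Equivalent S_u(X) = sup_{η∈ℝ} {η + E[u(X-η)]} of a bounded random variable X equals the entropic risk value -(1/γ) ln E[e^{-γX}]. -/

import Mathlib

open MeasureTheory Real

/-- For the exponential utility `u t = (1/γ)(1 - exp (-γ t))` with `γ > 0`,
the Optimized Certainty Equivalent `S_u(X) = ⨆ η, (η + E[u(X - η)])` of a bounded random
variable `X` equals the entropic risk value `-(1/γ) ln E[exp (-γ X)]`. -/
theorem oce_exponential_eq_entropic
    {Ω : Type*} [MeasurableSpace Ω] (μ : Measure Ω) [IsProbabilityMeasure μ]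
    (X : Ω → ℝ) (hX : Measurable X) (C : ℝ) (hbdd : ∀ ω, |X ω| ≤ C)
    (γ : ℝ) (hγ : 0 < γ) :
    (⨆ η : ℝ, (η + ∫ ω, (1 - Real.exp (-γ * (X ω - η))) / γ ∂μ))
      = -(1 / γ) * Real.log (∫ ω, Real.exp (-γ * X ω) ∂μ) := by
  have hint : Integrable (fun ω => Real.exp (-γ * X ω)) μ := by
    refine Integrable.of_bound (C := Real.exp (γ * C))
      (by fun_prop : Measurable fun ω => Real.exp (-γ * X ω)).aestronglyMeasurable
      (Filter.Eventually.of_forall fun ω => ?_)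
    rw [Real.norm_eq_abs, Real.abs_exp]
    apply Real.exp_le_exp.mpr
    have h := (abs_le.mp (hbdd ω)).1
    nlinarith
  have hpos : 0 < ∫ ω, Real.exp (-γ * X ω) ∂μ := integral_exp_pos hint
  set M := ∫ ω, Real.exp (-γ * X ω) ∂μ with hM
  have hval : ∀ η : ℝ, η + ∫ ω, (1 - Real.exp (-γ * (X ω - η))) / γ ∂μ
      = η + (1 - Real.exp (γ * η + Real.log M)) / γ := by
    intro η
    have h1 : ∀ ω, Real.exp (-γ * (X ω - η)) = Real.exp (γ * η) * Real.exp (-γ * X ω) := by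
      intro ω
      rw [← Real.exp_add]
      congr 1
      ring
    simp_rw [h1]
    rw [integral_div, integral_sub (integrable_const _) (hint.const_mul _),
      integral_const_mul, ← hM, Real.exp_add, Real.exp_log hpos]
    simp
  simp_rw [hval]
  have hle : ∀ η : ℝ, η + (1 - Real.exp (γ * η + Real.log M)) / γ ≤ -(1 / γ) * Real.log M := by
    intro η
    have h := Real.add_one_le_exp (γ * η + Real.log M)
    have h2 : (1 - Real.exp (γ * η + Real.log M)) / γ ≤ (-(γ * η + Real.log M)) / γ :=
      div_le_div_of_nonneg_right (by linarith) hγ.le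
    have h3 : η + (-(γ * η + Real.log M)) / γ = -(1 / γ) * Real.log M := by
      field_simp
      ring
    linarith
  apply le_antisymm (ciSup_le hle)
  refine le_ciSup_of_le ⟨_, Set.forall_mem_range.mpr hle⟩ (-(1 / γ) * Real.log M) ?_
  have h4 : γ * (-(1 / γ) * Real.log M) + Real.log M = 0 := by
    field_simp
    ring
  rw [h4]
  simp
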